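/- Let f ∈ ℂ[x₁,…,xₙ] be nonconstant with f(0)=0, and write f = ∑_{i≥r} f_i with f_i zero or homogeneous of degree i and f_r ≠ 0, r ≥ 2. Then (r+1)·c_0(f) ≤ n + c(f_r), where c(f_r) is the log-canonical threshold of f_r (the minimum over all zeros of f_r of the local log-canonical threshold). -/

import Mathlib

/-!
If `‖f‖^{-2s}` is integrable near `0`, Chebyshev's inequality bounds the volume of `{‖f‖ ≤ δ}` near
`0` by a multiple of `δ^{2s}`; this needs the zero set of `f` to be null, since `0 ^ (-2s)` has
the junk value `0`. For `x` in a fixed ball, `f(εx) = ε^r f_r(x) + O(ε^{r+1})`, so dilation by `ε` maps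
`{‖f_r‖ ≤ ε}` into `{‖f‖ = O(ε^{r+1})}`. As dilation by `ε` scales volume on `ℂⁿ` by `ε^{2n}`, the
set `{‖f_r‖ ≤ ε}` in the ball has volume `O(ε^{2((r+1)s - n)})`. By the layer-cake formula
`‖f_r‖^{-2σ}` is then integrable on the ball for every positive `σ < (r+1)s - n`. Balls around `0`
contain neighbourhoods of every zero of `f_r`, so `(r+1)s - n ≤ c(f_r)`. This is the analytic
counterpart of comparing the contact loci of `f` and `f_r` along arcs `t^m x(t)`.

The thresholds are suprema of real sets, so boundedness has to be checked: a polynomial is Lipschitz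
at a zero, which forces `s ≤ n` whenever `‖p‖^{-2s}` is integrable there (`le_of_integrableOn`).
-/

open MeasureTheory MvPolynomial

/-- The log-canonical threshold of a polynomial `f ∈ ℂ[x₁,…,xₙ]` at a point `y`
(with `f(y) = 0`), defined analytically as the supremum of the positive reals `s`
such that `‖f‖^{-2s}` is integrable on some neighbourhood of `y`. -/
noncomputable def lctAt {n : ℕ} (f : MvPolynomial (Fin n) ℂ) (y : Fin n → ℂ) : ℝ :=
  sSup {s : ℝ | 0 < s ∧ ∃ U ∈ nhds y,
    MeasureTheory.IntegrableOn
      (fun x : Fin n → ℂ => ‖MvPolynomial.eval x f‖ ^ (-2 * s)) U}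

/-- The (global) log-canonical threshold of `f`, the infimum of the local
log-canonical thresholds over the zeros of `f`. -/
noncomputable def lct {n : ℕ} (f : MvPolynomial (Fin n) ℂ) : ℝ :=
  sInf {c : ℝ | ∃ y, MvPolynomial.eval y f = 0 ∧ c = lctAt f y}

/-- The zero set of a nonzero polynomial is Lebesgue-null: by Fubini, almost every line in the
direction of the first coordinate meets it in a finite set. -/
lemma ae_eval_ne_zero : ∀ {n : ℕ} (p : MvPolynomial (Fin n) ℂ), p ≠ 0 →
    ∀ᵐ x : Fin n → ℂ, MvPolynomial.eval x p ≠ 0 := by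
  intro n
  induction n with
  | zero =>
    intro p hp
    refine Filter.Eventually.of_forall fun x hx => hp ?_
    rw [MvPolynomial.eq_C_of_isEmpty p] at hx ⊢
    rw [MvPolynomial.eval_C] at hx
    rw [hx, map_zero]
  | succ n ih =>
    intro p hp
    have hq : finSuccEquiv ℂ n p ≠ 0 := by simpa using hp
    obtain ⟨i, hi⟩ : ∃ i, (finSuccEquiv ℂ n p).coeff i ≠ 0 := by
      by_contra! h
      exact hq (Polynomial.ext (by simpa using h))
    have hmp := volume_preserving_piFinSuccAbove (fun _ : Fin (n + 1) => ℂ) 0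
    set e := MeasurableEquiv.piFinSuccAbove (fun _ : Fin (n + 1) => ℂ) 0 with he
    have hm : MeasurableSet {x : Fin (n + 1) → ℂ | MvPolynomial.eval x p = 0} :=
      (isClosed_eq (MvPolynomial.continuous_eval p) continuous_const).measurableSet
    rw [ae_iff]
    simp only [ne_eq, not_not]
    rw [← hmp.symm.measure_preimage hm.nullMeasurableSet, Measure.volume_eq_prod,
      Measure.prod_apply_symm (e.symm.measurable hm), lintegral_eq_zero_iff']
    · filter_upwards [ih _ hi] with s hs
      apply Set.Finite.measure_zero
      have hne : Polynomial.map (MvPolynomial.eval s) (finSuccEquiv ℂ n p) ≠ 0 := by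
        intro h0
        apply hs
        rw [← Polynomial.coeff_map, h0, Polynomial.coeff_zero]
      refine (Polynomial.finite_setOfPred_isRoot hne).subset fun y hy => ?_
      have : MvPolynomial.eval (Fin.cons y s : Fin (n + 1) → ℂ) p = 0 := by
        simpa [he, MeasurableEquiv.piFinSuccAbove, Fin.consEquiv] using hy
      rwa [eval_eq_eval_mv_eval'] at this
    · exact (measurable_measure_prodMk_right (e.symm.measurable hm)).aemeasurable

lemma eval_smul_of_isHomogeneous {n m : ℕ} {p : MvPolynomial (Fin n) ℂ} (hp : p.IsHomogeneous m)
    (c : ℝ) (x : Fin n → ℂ) :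
    MvPolynomial.eval (c • x) p = (c : ℂ) ^ m * MvPolynomial.eval x p := by
  rw [MvPolynomial.eval_eq', MvPolynomial.eval_eq', Finset.mul_sum]
  refine Finset.sum_congr rfl fun d hd => ?_
  have hdeg : ∑ i, d i = m := by
    have := hp (MvPolynomial.mem_support_iff.1 hd)
    rwa [Finsupp.weight_apply, Finsupp.sum_fintype _ _ (by simp), ← Finset.sum_congr rfl] at this
    simp
  simp only [Pi.smul_apply, Complex.real_smul, mul_pow, Finset.prod_mul_distrib,
    Finset.prod_pow_eq_pow_sum, hdeg]
  ring

/-- Chebyshev: integrability of `‖p‖^{-2s}` on `U` forces the sublevel sets of `‖p‖` in `U` to have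
volume `O(δ^{2s})`. -/
lemma volume_sublevel_le {n : ℕ} {p : MvPolynomial (Fin n) ℂ} (hp : p ≠ 0) {s : ℝ} (hs : 0 < s)
    {U : Set (Fin n → ℂ)}
    (hU : IntegrableOn (fun x : Fin n → ℂ => ‖MvPolynomial.eval x p‖ ^ (-2 * s)) U) :
    ∃ C : ENNReal, C ≠ ⊤ ∧ ∀ δ : ℝ, 0 < δ →
      volume ({x | ‖MvPolynomial.eval x p‖ ≤ δ} ∩ U) ≤ C * ENNReal.ofReal (δ ^ (2 * s)) := by
  have hfin := (hasFiniteIntegral_iff_ofReal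
    (Filter.Eventually.of_forall fun x => by positivity)).1 hU.2
  refine ⟨_, hfin.ne, fun δ hδ => ?_⟩
  have hcont := MvPolynomial.continuous_eval p
  have hm : MeasurableSet {x : Fin n → ℂ | ‖MvPolynomial.eval x p‖ ≤ δ} :=
    (isClosed_le hcont.norm continuous_const).measurableSet
  have hcheb := mul_meas_ge_le_lintegral₀ hU.1.aemeasurable.ennreal_ofReal
    (ENNReal.ofReal (δ ^ (-2 * s)))
  rw [← Measure.restrict_apply hm]
  have hle : (volume.restrict U) {x | ‖MvPolynomial.eval x p‖ ≤ δ} ≤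
      (volume.restrict U) {x | ENNReal.ofReal (δ ^ (-2 * s)) ≤
        ENNReal.ofReal (‖MvPolynomial.eval x p‖ ^ (-2 * s))} := by
    apply measure_mono_ae
    filter_upwards [ae_restrict_of_ae (ae_eval_ne_zero p hp)] with x hx hxδ
    exact ENNReal.ofReal_le_ofReal
      (Real.rpow_le_rpow_of_nonpos (norm_pos_iff.2 hx) hxδ (by linarith))
  have hpos : 0 < δ ^ (2 * s) := Real.rpow_pos_of_pos hδ _
  have hinv : ENNReal.ofReal (δ ^ (2 * s)) * ENNReal.ofReal (δ ^ (-2 * s)) = 1 := by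
    rw [← ENNReal.ofReal_mul hpos.le, ← Real.rpow_add hδ]
    simp
  calc _ ≤ _ := hle
    _ = ENNReal.ofReal (δ ^ (2 * s)) * (ENNReal.ofReal (δ ^ (-2 * s)) * _) := by
      rw [← mul_assoc, hinv, one_mul]
    _ ≤ ENNReal.ofReal (δ ^ (2 * s)) * _ := by gcongr
    _ = _ := mul_comm _ _

/-- On a finite measure space, a tail bound `O(t^{-a})` with `a > 1` gives integrability, by the
layer-cake formula. -/
lemma integrable_of_tail_le {α : Type*} [MeasurableSpace α] {μ : Measure α} [IsFiniteMeasure μ]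
    {F : α → ℝ} (hF : ∀ x, 0 ≤ F x) (hFm : AEStronglyMeasurable F μ) {a T : ℝ} (ha : 1 < a)
    (hT : 0 < T) {C : ENNReal} (hC : C ≠ ⊤)
    (h : ∀ t, T < t → μ {x | t < F x} ≤ C * ENNReal.ofReal (t ^ (-a))) : Integrable F μ := by
  refine ⟨hFm, ?_⟩
  rw [hasFiniteIntegral_iff_ofReal (Filter.Eventually.of_forall hF),
    lintegral_eq_lintegral_meas_lt μ (Filter.Eventually.of_forall hF) hFm.aemeasurable,
    ← Set.Ioc_union_Ioi_eq_Ioi hT.le]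
  refine (lintegral_union_le _ _ _).trans_lt (ENNReal.add_lt_top.2 ⟨?_, ?_⟩)
  · calc _ ≤ ∫⁻ _ in Set.Ioc 0 T, μ Set.univ := lintegral_mono fun t => measure_mono (Set.subset_univ _)
      _ < ⊤ := by
        rw [setLIntegral_const, Real.volume_Ioc]
        exact ENNReal.mul_lt_top (measure_lt_top _ _) ENNReal.ofReal_lt_top
  · calc _ ≤ ∫⁻ t in Set.Ioi T, C * ENNReal.ofReal (t ^ (-a)) :=
          setLIntegral_mono' measurableSet_Ioi fun t ht => h t ht
      _ < ⊤ := by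
        rw [lintegral_const_mul' _ _ hC]
        refine ENNReal.mul_lt_top hC.lt_top ?_
        have hi := integrableOn_Ioi_rpow_of_lt (a := -a) (by linarith) hT
        refine (hasFiniteIntegral_iff_ofReal ?_).1 hi.2
        filter_upwards [ae_restrict_mem measurableSet_Ioi] with t ht
        exact Real.rpow_nonneg (hT.trans ht).le _

lemma finrank_real_pi (n : ℕ) : Module.finrank ℝ (Fin n → ℂ) = 2 * n := by
  rw [Module.finrank_pi_fintype]
  simp [Complex.finrank_real_complex, mul_comm]

/-- If `A ε^a ≤ C ε^b` for all small `ε > 0`, with `A ≠ 0`, then `b ≤ a`. -/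
lemma exponent_le {A C : ENNReal} (hA : A ≠ 0) (hC : C ≠ ⊤) {a b ε₀ : ℝ} (hε₀ : 0 < ε₀)
    (h : ∀ ε : ℝ, 0 < ε → ε ≤ ε₀ →
      A * ENNReal.ofReal (ε ^ a) ≤ C * ENNReal.ofReal (ε ^ b)) : b ≤ a := by
  by_contra! hab
  have hlim : Filter.Tendsto (fun ε : ℝ => C * ENNReal.ofReal (ε ^ (b - a)))
      (nhdsWithin 0 (Set.Ioi 0)) (nhds 0) := by
    have h1 : Filter.Tendsto (fun ε : ℝ => ε ^ (b - a)) (nhdsWithin 0 (Set.Ioi 0)) (nhds 0) := by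
      have := (Real.continuousAt_rpow_const 0 (b - a) (Or.inr (by linarith))).tendsto
      rw [Real.zero_rpow (by linarith)] at this
      exact this.mono_left nhdsWithin_le_nhds
    have h2 := ENNReal.Tendsto.const_mul (a := C) (ENNReal.tendsto_ofReal h1) (Or.inr hC)
    simpa using h2
  apply hA
  refine le_antisymm (ge_of_tendsto hlim ?_) zero_le
  filter_upwards [Ioc_mem_nhdsGT hε₀] with ε hε
  have hpos : 0 < ε ^ (-a) := Real.rpow_pos_of_pos hε.1 _
  calc A = A * ENNReal.ofReal (ε ^ a) * ENNReal.ofReal (ε ^ (-a)) := by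
        rw [mul_assoc, ← ENNReal.ofReal_mul (by have := hε.1; positivity), ← Real.rpow_add hε.1]
        simp
    _ ≤ C * ENNReal.ofReal (ε ^ b) * ENNReal.ofReal (ε ^ (-a)) := by
        gcongr ?_ * _
        exact h ε hε.1 hε.2
    _ = _ := by
        rw [mul_assoc, ← ENNReal.ofReal_mul (by have := hε.1; positivity), ← Real.rpow_add hε.1,
          sub_eq_add_neg]

/-- At a zero, `p` is Lipschitz, so its log-canonical threshold is a supremum over a set bounded
by the dimension. -/
lemma le_of_integrableOn {n : ℕ} {p : MvPolynomial (Fin n) ℂ} (hp : p ≠ 0) {y : Fin n → ℂ}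
    (hy : MvPolynomial.eval y p = 0) {s : ℝ} (hs : 0 < s) {U : Set (Fin n → ℂ)} (hUy : U ∈ nhds y)
    (hU : IntegrableOn (fun x : Fin n → ℂ => ‖MvPolynomial.eval x p‖ ^ (-2 * s)) U) :
    s ≤ n := by
  obtain ⟨C, hC, hvol⟩ := volume_sublevel_le hp hs hU
  have hd : DifferentiableAt ℂ (fun x : Fin n → ℂ => MvPolynomial.eval x p) y :=
    (AnalyticOnNhd.eval_mvPolynomial p y (Set.mem_univ y)).differentiableAt
  obtain ⟨L, hL, hbound⟩ := hd.isBigO_sub.exists_pos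
  rw [Asymptotics.IsBigOWith] at hbound
  obtain ⟨ρ, hρ, hsub⟩ := Metric.nhds_basis_closedBall.mem_iff.1 (Filter.inter_mem hUy hbound)
  have hLpos : 0 < L ^ (2 * s) := Real.rpow_pos_of_pos hL _
  have key : (2 * s : ℝ) ≤ (2 * n : ℕ) := by
    refine exponent_le (A := volume (Metric.closedBall (0 : Fin n → ℂ) 1))
      (C := C * ENNReal.ofReal (L ^ (2 * s)))
      (Metric.measure_closedBall_pos _ _ one_pos).ne'
      (ENNReal.mul_ne_top hC ENNReal.ofReal_ne_top) hρ fun ε hε hερ => ?_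
    have hin : Metric.closedBall y ε ⊆ {x | ‖MvPolynomial.eval x p‖ ≤ L * ε} ∩ U := by
      intro x hx
      have hx' := hsub (Metric.closedBall_subset_closedBall hερ hx)
      refine ⟨?_, hx'.1⟩
      have h1 : ‖MvPolynomial.eval x p - MvPolynomial.eval y p‖ ≤ L * ‖x - y‖ := hx'.2
      rw [hy, sub_zero] at h1
      rw [Metric.mem_closedBall, dist_eq_norm] at hx
      exact h1.trans (by gcongr)
    have h2 := (measure_mono hin).trans (hvol (L * ε) (by positivity))
    rw [Measure.addHaar_closedBall' _ _ hε.le, finrank_real_pi, Real.mul_rpow hL.le hε.le,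
      ENNReal.ofReal_mul hLpos.le, ← mul_assoc] at h2
    rw [Real.rpow_natCast, mul_comm]
    exact h2
  push_cast at key
  linarith

/-- On a bounded set, `p(εx) = ε^r p_r(x) + O(ε^{r+1})` when `p` has no terms of degree below `r`. -/
lemma norm_eval_smul_le {n : ℕ} (p : MvPolynomial (Fin n) ℂ) (r : ℕ)
    (hlow : ∀ i < r, homogeneousComponent i p = 0) (R : ℝ) :
    ∃ M : ℝ, 0 ≤ M ∧ ∀ ε : ℝ, 0 < ε → ε ≤ 1 → ∀ x ∈ Metric.closedBall (0 : Fin n → ℂ) R,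
      ‖MvPolynomial.eval (ε • x) p‖ ≤
        ε ^ r * ‖MvPolynomial.eval x (homogeneousComponent r p)‖ + ε ^ (r + 1) * M := by
  have hcont : Continuous fun x : Fin n → ℂ =>
      ∑ i ∈ Finset.range (p.totalDegree + 1), ‖MvPolynomial.eval x (homogeneousComponent i p)‖ :=
    continuous_finsetSum _ fun i _ => (MvPolynomial.continuous_eval _).norm
  obtain ⟨M, hM⟩ := (isCompact_closedBall (0 : Fin n → ℂ) R).exists_bound_of_continuousOn
    hcont.continuousOn
  refine ⟨max M 0, le_max_right _ _, fun ε hε hε1 x hx => ?_⟩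
  have hsum : ∀ z, MvPolynomial.eval z p =
      ∑ i ∈ Finset.range (p.totalDegree + 1), MvPolynomial.eval z (homogeneousComponent i p) := by
    intro z
    rw [← map_sum, sum_homogeneousComponent]
  have hterm : ∀ i, ‖MvPolynomial.eval (ε • x) (homogeneousComponent i p)‖ ≤
      (if i = r then ε ^ r * ‖MvPolynomial.eval x (homogeneousComponent r p)‖ else 0) +
        ε ^ (r + 1) * ‖MvPolynomial.eval x (homogeneousComponent i p)‖ := by
    intro i
    rcases lt_trichotomy i r with hi | hi | hi
    · simp [hlow i hi, hi.ne]
    · subst hi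
      rw [eval_smul_of_isHomogeneous (homogeneousComponent_isHomogeneous i p)]
      simp only [norm_mul, norm_pow, Complex.norm_real, Real.norm_of_nonneg hε.le, if_true]
      have : 0 ≤ ε ^ (i + 1) * ‖MvPolynomial.eval x (homogeneousComponent i p)‖ := by positivity
      linarith
    · rw [eval_smul_of_isHomogeneous (homogeneousComponent_isHomogeneous i p)]
      simp only [norm_mul, norm_pow, Complex.norm_real, Real.norm_of_nonneg hε.le, hi.ne', if_false,
        zero_add]
      gcongr ?_ * _
      exact pow_le_pow_of_le_one hε.le hε1 hi
  calc _ ≤ ∑ i ∈ Finset.range (p.totalDegree + 1),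
        ‖MvPolynomial.eval (ε • x) (homogeneousComponent i p)‖ := by
        rw [hsum]; exact norm_sum_le _ _
    _ ≤ _ := Finset.sum_le_sum fun i _ => hterm i
    _ ≤ _ := by
      rw [Finset.sum_add_distrib, ← Finset.mul_sum, Finset.sum_ite_eq']
      gcongr
      · split_ifs
        · exact le_rfl
        · positivity
      · exact (le_abs_self _).trans ((hM x hx).trans (le_max_left _ _))

open scoped Pointwise in
/-- Dilating `{‖p_r‖ ≤ ε}` by `ε` lands in `{‖p‖ = O(ε^{r+1})}`, so
sublevel sets of the lowest form `p_r` in a ball have volume `O(ε^{2((r+1)s-n)})`. -/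
lemma volume_sublevel_lowest_form_le {n : ℕ} {p : MvPolynomial (Fin n) ℂ} (hp : p ≠ 0) (r : ℕ)
    (hlow : ∀ i < r, homogeneousComponent i p = 0) {s : ℝ} (hs : 0 < s)
    {U : Set (Fin n → ℂ)} (hU0 : U ∈ nhds 0)
    (hU : IntegrableOn (fun x : Fin n → ℂ => ‖MvPolynomial.eval x p‖ ^ (-2 * s)) U)
    {R : ℝ} (hR : 0 < R) :
    ∃ C : ENNReal, C ≠ ⊤ ∧ ∃ ε₀ : ℝ, 0 < ε₀ ∧ ∀ ε : ℝ, 0 < ε → ε ≤ ε₀ →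
      volume ({x | ‖MvPolynomial.eval x (homogeneousComponent r p)‖ ≤ ε} ∩ Metric.closedBall 0 R) ≤
        C * ENNReal.ofReal (ε ^ (2 * ((r + 1) * s - n))) := by
  obtain ⟨C, hC, hvol⟩ := volume_sublevel_le hp hs hU
  obtain ⟨M, hM0, hM⟩ := norm_eval_smul_le p r hlow R
  obtain ⟨ρ, hρ, hsub⟩ := Metric.nhds_basis_closedBall.mem_iff.1 hU0
  have hMpos : 0 < (1 + M) ^ (2 * s) := Real.rpow_pos_of_pos (by linarith) _
  refine ⟨C * ENNReal.ofReal ((1 + M) ^ (2 * s)), ENNReal.mul_ne_top hC ENNReal.ofReal_ne_top,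
    min 1 (ρ / R), by positivity, fun ε hε hε0 => ?_⟩
  have hε1 : ε ≤ 1 := hε0.trans (min_le_left _ _)
  have hεR : ε * R ≤ ρ := (le_div_iff₀ hR).1 (hε0.trans (min_le_right _ _))
  set S := {x | ‖MvPolynomial.eval x (homogeneousComponent r p)‖ ≤ ε} ∩
    Metric.closedBall (0 : Fin n → ℂ) R with hS
  have hincl : ε • S ⊆ {x | ‖MvPolynomial.eval x p‖ ≤ (1 + M) * ε ^ (r + 1)} ∩ U := by
    rintro _ ⟨x, ⟨hx1, hx2⟩, rfl⟩
    constructor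
    · have h1 := hM ε hε hε1 x hx2
      have h2 : ε ^ r * ‖MvPolynomial.eval x (homogeneousComponent r p)‖ ≤ ε ^ r * ε := by
        gcongr
        exact hx1
      have h3 : ε ^ r * ε = ε ^ (r + 1) := (pow_succ ε r).symm
      simp only [Set.mem_ofPred_eq]
      linarith
    · apply hsub
      rw [mem_closedBall_zero_iff] at hx2 ⊢
      simp only [norm_smul, Real.norm_of_nonneg hε.le]
      exact (mul_le_mul_of_nonneg_left hx2 hε.le).trans hεR
  have h1 := (measure_mono hincl).trans (hvol _ (by positivity))
  rw [Measure.addHaar_smul, finrank_real_pi, abs_of_pos (by positivity),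
    Real.mul_rpow (by linarith) (by positivity), ENNReal.ofReal_mul hMpos.le, ← mul_assoc] at h1
  have hpow : (ε ^ (r + 1)) ^ (2 * s) =
      ε ^ (2 * ((r + 1) * s - n)) * ε ^ (2 * n) := by
    rw [← Real.rpow_natCast, ← Real.rpow_mul hε.le, ← Real.rpow_natCast, ← Real.rpow_add hε]
    congr 1
    push_cast
    ring
  rw [hpow, ENNReal.ofReal_mul (by positivity), ← mul_assoc, mul_comm] at h1
  exact (ENNReal.mul_le_mul_iff_left (by simp; positivity) ENNReal.ofReal_ne_top).1 h1

lemma integrableOn_lowest_form {n : ℕ} {p : MvPolynomial (Fin n) ℂ} (hp : p ≠ 0) (r : ℕ)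
    (hlow : ∀ i < r, homogeneousComponent i p = 0) {s : ℝ} (hs : 0 < s)
    {U : Set (Fin n → ℂ)} (hU0 : U ∈ nhds 0)
    (hU : IntegrableOn (fun x : Fin n → ℂ => ‖MvPolynomial.eval x p‖ ^ (-2 * s)) U)
    {R : ℝ} (hR : 0 < R) {σ : ℝ} (hσ : 0 < σ) (hσs : σ < (r + 1) * s - n) :
    IntegrableOn (fun x : Fin n → ℂ =>
      ‖MvPolynomial.eval x (homogeneousComponent r p)‖ ^ (-2 * σ)) (Metric.closedBall 0 R) := by
  obtain ⟨C, hC, ε₀, hε₀, hvol⟩ := volume_sublevel_lowest_form_le hp r hlow hs hU0 hU hR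
  have : IsFiniteMeasure (volume.restrict (Metric.closedBall (0 : Fin n → ℂ) R)) :=
    ⟨by simpa using (isCompact_closedBall (0 : Fin n → ℂ) R).measure_lt_top⟩
  have hmeas : Measurable fun x : Fin n → ℂ =>
      ‖MvPolynomial.eval x (homogeneousComponent r p)‖ ^ (-2 * σ) :=
    (MvPolynomial.continuous_eval _).norm.measurable.pow_const _
  refine integrable_of_tail_le (a := ((r + 1) * s - n) / σ) (T := ε₀ ^ (-2 * σ))
    (fun x => by positivity) hmeas.aestronglyMeasurable ((one_lt_div hσ).2 hσs)
    (Real.rpow_pos_of_pos hε₀ _) hC fun t ht => ?_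
  have ht0 : 0 < t := (Real.rpow_pos_of_pos hε₀ _).trans ht
  -- The superlevel set `t < ‖p_r‖^{-2σ}` is a sublevel set of `‖p_r‖` at this height.
  set ε := t ^ (-(2 * σ)⁻¹) with hε_def
  have hε : 0 < ε := Real.rpow_pos_of_pos ht0 _
  have hεt : ε ^ (-2 * σ) = t := by
    rw [hε_def, ← Real.rpow_mul ht0.le]
    have : -(2 * σ)⁻¹ * (-2 * σ) = 1 := by field_simp
    rw [this, Real.rpow_one]
  have hεε₀ : ε ≤ ε₀ := by
    rw [← hεt] at ht
    exact ((Real.rpow_lt_rpow_iff_of_neg hε₀ hε (by linarith)).1 ht).le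
  rw [Measure.restrict_apply (measurableSet_lt measurable_const hmeas)]
  refine (measure_mono (Set.inter_subset_inter_left _ fun x hx => ?_)).trans
    ((hvol ε hε hεε₀).trans_eq ?_)
  · simp only [Set.mem_ofPred_eq] at hx ⊢
    by_contra! hlt
    rw [← hεt] at hx
    exact absurd (Real.rpow_lt_rpow_of_neg hε hlt (by linarith : -2 * σ < 0)) (by linarith)
  · rw [hε_def, ← Real.rpow_mul ht0.le]
    congr 3
    field_simp

lemma lctAt_nonneg {n : ℕ} (p : MvPolynomial (Fin n) ℂ) (y : Fin n → ℂ) : 0 ≤ lctAt p y :=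
  Real.sSup_nonneg fun _ hs => hs.1.le

lemma le_lctAt {n : ℕ} {p : MvPolynomial (Fin n) ℂ} (hp : p ≠ 0) {y : Fin n → ℂ}
    (hy : MvPolynomial.eval y p = 0) {s : ℝ} (hs : 0 < s) {U : Set (Fin n → ℂ)} (hUy : U ∈ nhds y)
    (hU : IntegrableOn (fun x : Fin n → ℂ => ‖MvPolynomial.eval x p‖ ^ (-2 * s)) U) :
    s ≤ lctAt p y :=
  le_csSup ⟨n, fun _ ⟨ht, _, hVy, hV⟩ => le_of_integrableOn hp hy ht hVy hV⟩ ⟨hs, U, hUy, hU⟩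

/-- Write `f = ∑_{i≥r} f_i` with `f_i` homogeneous of degree `i`, `f_r ≠ 0`, `r ≥ 2`.
Then `(r+1)·c₀(f) ≤ n + c(f_r)`. -/
theorem stmt8 {n : ℕ} (f : MvPolynomial (Fin n) ℂ) (r : ℕ)
    (hf : 0 < f.totalDegree) (hr : 2 ≤ r)
    (hlow : ∀ i < r, MvPolynomial.homogeneousComponent i f = 0)
    (hfr : MvPolynomial.homogeneousComponent r f ≠ 0) :
    ((r : ℝ) + 1) * lctAt f 0 ≤ (n : ℝ) + lct (MvPolynomial.homogeneousComponent r f) := by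
  have hf0 : f ≠ 0 := by
    rintro rfl
    simp at hf
  set g := homogeneousComponent r f with hg
  have hg0 : MvPolynomial.eval 0 g = 0 := by
    have h := eval_smul_of_isHomogeneous (homogeneousComponent_isHomogeneous r f) 0 0
    rwa [zero_smul, Complex.ofReal_zero, zero_pow (by omega), zero_mul] at h
  have hr1 : (0 : ℝ) < (r : ℝ) + 1 := by positivity
  have hlct : 0 ≤ lct g := by
    refine Real.sInf_nonneg ?_
    rintro _ ⟨y, _, rfl⟩
    exact lctAt_nonneg g y
  rw [mul_comm, ← le_div_iff₀ hr1]
  refine Real.sSup_le ?_ (by positivity)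
  rintro s ⟨hs, U, hU0, hU⟩
  rw [le_div_iff₀ hr1]
  suffices h : ((r : ℝ) + 1) * s - n ≤ lct g by linarith
  refine le_csInf ⟨_, 0, hg0, rfl⟩ ?_
  rintro _ ⟨y, hy, rfl⟩
  refine le_of_forall_lt_imp_le_of_dense fun σ hσ => ?_
  rcases le_or_gt σ 0 with hneg | hpos
  · exact hneg.trans (lctAt_nonneg g y)
  · have hnhds : Metric.closedBall (0 : Fin n → ℂ) (‖y‖ + 1) ∈ nhds y :=
      Filter.mem_of_superset (Metric.isOpen_ball.mem_nhds (by simp)) Metric.ball_subset_closedBall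
    exact le_lctAt hfr hy hpos hnhds
      (integrableOn_lowest_form hf0 r hlow hs hU0 hU (by positivity) hpos hσ)
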